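/- Let T > 0, let K be a Volterra kernel on [0,T] satisfying Condition (A) with exponent α ∈ [0, 1/4), and let R(s,t) := ∫_0^{min(s,t)} K(t,r) K(s,r) dr. If φ₁, φ₂: [0,T] → ℝ are λ-Hölder continuous with λ > α, then the 2D Young–Stieltjes integral ∫_{[0,T]²} φ₁(s) φ₂(t) dR(s,t) exists and equals ∫_0^T (K*φ₁)(r) (K*φ₂)(r) dr. -/

import Mathlib

open MeasureTheory Set

noncomputable section

namespace YS

variable {E : Type*} [NormedAddCommGroup E] [NormedSpace ℝ E]

/-- A Volterra kernel: a measurable `K : ℝ² → ℝ` with `K t s = 0` whenever `s ≥ t`. -/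
def IsVolterraKernel (K : ℝ → ℝ → ℝ) : Prop :=
  Measurable (Function.uncurry K) ∧ ∀ t s : ℝ, t ≤ s → K t s = 0

/-- Condition (A) with exponent `α` and constant `C`; here `K' t s` denotes the partial
derivative `∂K(t,s)/∂t`, whose existence is part of the condition. -/
def CondA (T α C : ℝ) (K K' : ℝ → ℝ → ℝ) : Prop :=
  (∀ s t : ℝ, 0 < s → s < t → t ≤ T → |K t s| ≤ C * s ^ (-α) * (t - s) ^ (-α)) ∧
  ∀ s t : ℝ, 0 < s → s < t → t ≤ T →
    HasDerivAt (fun r => K r s) (K' t s) t ∧ |K' t s| ≤ C * (t - s) ^ (-(α + 1))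

/-- The operator `𝒦*`:  `(𝒦*φ)(s) = φ(s)K(T,s) + ∫_s^T [φ(r) − φ(s)] ∂K(r,s)/∂r dr`. -/
def Kstar (T : ℝ) (K K' : ℝ → ℝ → ℝ) (φ : ℝ → E) (s : ℝ) : E :=
  K T s • φ s + ∫ r in s..T, K' r s • (φ r - φ s)

/-- The operator `A^K`. -/
def AK (T : ℝ) (K' : ℝ → ℝ → ℝ) (φ : ℝ → E) (s : ℝ) : E :=
  ∫ r in s..T, K' r s • (φ r - φ s)

/-- Rectangular increment `f(u₁,u₂;v₁,v₂)`. -/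
def rectInc (ψ : ℝ → ℝ → E) (u₁ u₂ v₁ v₂ : ℝ) : E :=
  ψ u₁ v₁ + ψ u₂ v₂ - ψ u₁ v₂ - ψ u₂ v₁

/-- The operator `B^K`. -/
def BK (T : ℝ) (K' : ℝ → ℝ → ℝ) (ψ : ℝ → ℝ → E) (u v : ℝ) : E :=
  ∫ r₂ in v..T, ∫ r₁ in u..T, (K' r₁ u * K' r₂ v) • rectInc ψ u r₁ v r₂

/-- The operator `𝒦* ⊗ 𝒦*`. -/
def KstarT (T : ℝ) (K K' : ℝ → ℝ → ℝ) (ψ : ℝ → ℝ → E) (u v : ℝ) : E :=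
  (K T u * K T v) • ψ u v + K T v • AK T K' (fun x => ψ x v) u +
    K T u • AK T K' (fun y => ψ u y) v + BK T K' ψ u v

/-- A partition `0 = s₀ < s₁ < ⋯ < s_n = T` of `[0,T]`. -/
structure Partition (T : ℝ) where
  n : ℕ
  pts : ℕ → ℝ
  n_pos : 0 < n
  first : pts 0 = 0
  last : pts n = T
  lt : ∀ i < n, pts i < pts (i + 1)

/-- Mesh of a partition: the largest increment. -/
def Partition.mesh {T : ℝ} (P : Partition T) : ℝ :=
  (Finset.range P.n).sup' (Finset.nonempty_range_iff.mpr P.n_pos.ne')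
    fun i => P.pts (i + 1) - P.pts i

/-- One-dimensional step approximation `φ^π`. -/
def step1 {T : ℝ} (P : Partition T) (φ : ℝ → E) (s : ℝ) : E :=
  ∑ i ∈ Finset.range P.n,
    (Set.Ico (P.pts i) (P.pts (i + 1))).indicator (fun _ => φ (P.pts i)) s

/-- Two-dimensional step approximation `ψ^π` for the grid partition `P × Q`. -/
def step2 {T : ℝ} (P Q : Partition T) (ψ : ℝ → ℝ → E) (u v : ℝ) : E :=
  ∑ i ∈ Finset.range P.n, ∑ j ∈ Finset.range Q.n,
    ((Set.Ico (P.pts i) (P.pts (i + 1))) ×ˢ (Set.Ico (Q.pts j) (Q.pts (j + 1)))).indicator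
      (fun _ => ψ (P.pts i) (Q.pts j)) (u, v)

/-- `λ`-Hölder continuity on `[0,T]` with constant `C`. -/
def IsHolderWith (T lam C : ℝ) (φ : ℝ → E) : Prop :=
  ∀ t₁ ∈ Icc (0:ℝ) T, ∀ t₂ ∈ Icc (0:ℝ) T, ‖φ t₁ - φ t₂‖ ≤ C * |t₁ - t₂| ^ lam

/-- `λ`-Hölder continuity on `[0,T]`. -/
def IsHolder (T lam : ℝ) (φ : ℝ → E) : Prop := ∃ C : ℝ, IsHolderWith T lam C φ

/-- `λ`-Hölder bi-continuity with constant `C`. -/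
def IsHolderBiWith (T lam C : ℝ) (ψ : ℝ → ℝ → E) : Prop :=
  (∀ u₁ ∈ Icc (0:ℝ) T, ∀ u₂ ∈ Icc (0:ℝ) T, ∀ v ∈ Icc (0:ℝ) T,
      ‖ψ u₂ v - ψ u₁ v‖ ≤ C * |u₂ - u₁| ^ lam) ∧
  ∀ u ∈ Icc (0:ℝ) T, ∀ v₁ ∈ Icc (0:ℝ) T, ∀ v₂ ∈ Icc (0:ℝ) T,
      ‖ψ u v₂ - ψ u v₁‖ ≤ C * |v₂ - v₁| ^ lam

/-- `λ`-Hölder bi-continuity. -/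
def IsHolderBi (T lam : ℝ) (ψ : ℝ → ℝ → E) : Prop := ∃ C : ℝ, IsHolderBiWith T lam C ψ

/-- Strong `λ`-Hölder bi-continuity with constant `C`. -/
def IsStrongHolderBiWith (T lam C : ℝ) (ψ : ℝ → ℝ → E) : Prop :=
  IsHolderBiWith T lam C ψ ∧
  ∀ u₁ ∈ Icc (0:ℝ) T, ∀ u₂ ∈ Icc (0:ℝ) T, ∀ v₁ ∈ Icc (0:ℝ) T, ∀ v₂ ∈ Icc (0:ℝ) T,
    ‖rectInc ψ u₁ u₂ v₁ v₂‖ ≤ C * |u₂ - u₁| ^ lam * |v₂ - v₁| ^ lam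

/-- Strong `λ`-Hölder bi-continuity. -/
def IsStrongHolderBi (T lam : ℝ) (ψ : ℝ → ℝ → E) : Prop :=
  ∃ C : ℝ, IsStrongHolderBiWith T lam C ψ

/-- The covariance function `R(s,t) = ∫_0^{s∧t} K(t,r)K(s,r) dr` of the Volterra process. -/
def covR (K : ℝ → ℝ → ℝ) (s t : ℝ) : ℝ := ∫ r in (0:ℝ)..(min s t), K t r * K s r

/-- The 2D Riemann–Stieltjes sum of `f` against `g` over the grid partition `P × Q`. -/
def RSsum {T : ℝ} (P Q : Partition T) (f g : ℝ → ℝ → ℝ) : ℝ :=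
  ∑ i ∈ Finset.range P.n, ∑ j ∈ Finset.range Q.n,
    f (P.pts i) (Q.pts j) *
      rectInc g (P.pts i) (P.pts (i + 1)) (Q.pts j) (Q.pts (j + 1))

lemma condA_mono {T α α' C : ℝ} (hT : 0 < T) (hαα' : α ≤ α') {K K' : ℝ → ℝ → ℝ}
    (h : CondA T α C K K') : ∃ C' : ℝ, 0 ≤ C' ∧ CondA T α' C' K K' := by
  set d := α' - α with hd
  have hd0 : 0 ≤ d := by linarith
  have key : ∀ (x p : ℝ), 0 < x → x ≤ T → x ^ (-(α + p)) ≤ T ^ d * x ^ (-(α' + p)) := by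
    intro x p hx hxT
    have : x ^ (-(α + p)) = x ^ d * x ^ (-(α' + p)) := by
      rw [← Real.rpow_add hx]; congr 1; rw [hd]; ring
    rw [this]
    have := Real.rpow_le_rpow hx.le hxT hd0
    gcongr
  have hTd : 0 ≤ T ^ d := by positivity
  refine ⟨|C| * (T ^ d + T ^ d * T ^ d), by positivity, ?_, ?_⟩
  · intro s t hs hst htT
    refine (h.1 s t hs hst htT).trans ?_
    have k1 := key s 0 hs (by linarith)
    have k2 := key (t - s) 0 (by linarith) (by linarith)
    simp only [add_zero] at k1 k2
    have hts : 0 < t - s := by linarith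
    calc C * s ^ (-α) * (t - s) ^ (-α) ≤ |C| * s ^ (-α) * (t - s) ^ (-α) := by
          gcongr; exact le_abs_self C
      _ ≤ |C| * (T ^ d * s ^ (-α')) * (T ^ d * (t - s) ^ (-α')) := by gcongr
      _ = |C| * (T ^ d * T ^ d) * s ^ (-α') * (t - s) ^ (-α') := by ring
      _ ≤ _ := by gcongr; linarith
  · intro s t hs hst htT
    refine ⟨(h.2 s t hs hst htT).1, (h.2 s t hs hst htT).2.trans ?_⟩
    have hts : 0 < t - s := by linarith
    have k2 := key (t - s) 1 (by linarith) (by linarith)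
    calc C * (t - s) ^ (-(α + 1)) ≤ |C| * (t - s) ^ (-(α + 1)) := by
          gcongr; exact le_abs_self C
      _ ≤ |C| * (T ^ d * (t - s) ^ (-(α' + 1))) := by gcongr
      _ = |C| * T ^ d * (t - s) ^ (-(α' + 1)) := by ring
      _ ≤ _ := by
        gcongr
        nlinarith [mul_nonneg hTd hTd]

lemma holder_cont {T lam H : ℝ} (hlam : 0 < lam) {φ : ℝ → ℝ}
    (h : IsHolderWith T lam H φ) : ContinuousOn φ (Icc 0 T) := by
  intro x hx
  rw [ContinuousWithinAt, tendsto_iff_norm_sub_tendsto_zero]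
  have h0 : Filter.Tendsto (fun y : ℝ => H * |y - x| ^ lam) (nhdsWithin x (Icc 0 T)) (nhds 0) := by
    have : Continuous (fun y : ℝ => H * |y - x| ^ lam) := by
      refine continuous_const.mul (Continuous.rpow_const (by fun_prop) (fun _ => Or.inr hlam.le))
    have h2 := this.tendsto x
    simp only [sub_self, abs_zero, Real.zero_rpow hlam.ne', mul_zero] at h2
    exact h2.mono_left nhdsWithin_le_nhds
  refine squeeze_zero' (Filter.Eventually.of_forall fun _ => norm_nonneg _) ?_ h0
  filter_upwards [self_mem_nhdsWithin] with y hy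
  exact h y hy x hx

lemma rpow_ii {a b r p : ℝ} (hp : 0 < p) :
    IntervalIntegrable (fun x => (x - r) ^ (p - 1)) volume a b := by
  have := (intervalIntegral.intervalIntegrable_rpow' (a := a - r) (b := b - r)
    (r := p - 1) (by linarith)).comp_sub_right r
  simpa using this

lemma rpow_int {a b r p : ℝ} (hp : 0 < p) :
    ∫ x in a..b, (x - r) ^ (p - 1) = ((b - r) ^ p - (a - r) ^ p) / p := by
  rw [intervalIntegral.integral_comp_sub_right (fun x => x ^ (p - 1)) r,
    integral_rpow (Or.inl (by linarith))]
  simp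

lemma K'_aesm {T α C : ℝ} {K K' : ℝ → ℝ → ℝ} (h : CondA T α C K K') {r a b : ℝ} (hr : 0 < r)
    (ha : r ≤ a) (hb : b ≤ T) :
    AEStronglyMeasurable (fun x => K' x r) (volume.restrict (Ioc a b)) := by
  have hm : Measurable (deriv (fun x => K x r)) := measurable_deriv _
  refine hm.aestronglyMeasurable.congr ?_
  refine (ae_restrict_iff' measurableSet_Ioc).2 (Filter.Eventually.of_forall fun x hx => ?_)
  exact (h.2 r x hr (lt_of_le_of_lt ha hx.1) (hx.2.trans hb)).1.deriv

lemma K'_ftc {T α C : ℝ} {K K' : ℝ → ℝ → ℝ} (h : CondA T α C K K') {r a b : ℝ} (hr : 0 < r)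
    (ha : r < a) (hab : a ≤ b) (hb : b ≤ T) :
    IntervalIntegrable (fun x => K' x r) volume a b ∧ ∫ x in a..b, K' x r = K b r - K a r := by
  have hi : IntervalIntegrable (fun x => K' x r) volume a b := by
    have hc : IntervalIntegrable (fun x => C * (x - r) ^ (-(α + 1))) volume a b := by
      apply ContinuousOn.intervalIntegrable
      rw [uIcc_of_le hab]
      refine continuousOn_const.mul (ContinuousOn.rpow_const (by fun_prop) ?_)
      intro x hx
      left
      have := hx.1
      linarith
    refine hc.mono_fun' ?_ ?_
    · rw [uIoc_of_le hab]; exact K'_aesm h hr ha.le hb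
    · rw [uIoc_of_le hab]
      refine (ae_restrict_iff' measurableSet_Ioc).2 (Filter.Eventually.of_forall fun x hx => ?_)
      exact (h.2 r x hr (ha.trans hx.1) (hx.2.trans hb)).2
  refine ⟨hi, intervalIntegral.integral_eq_sub_of_hasDerivAt (f := fun x => K x r) ?_ hi⟩
  intro x hx
  rw [uIcc_of_le hab] at hx
  exact (h.2 r x hr (ha.trans_le hx.1) (hx.2.trans hb)).1

/-- basic bound -/
lemma K'_mul_bound {T α C : ℝ} {K K' : ℝ → ℝ → ℝ} (hC : 0 ≤ C) (h : CondA T α C K K')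
    {r a b p D : ℝ} (hr : 0 < r) (ha : r ≤ a) (hab : a ≤ b) (hb : b ≤ T) (hp : 0 < p) {ψ : ℝ → ℝ}
    (hψ : ContinuousOn ψ (Icc 0 T))
    (hD : ∀ x ∈ Ioc a b, |ψ x| ≤ D * (x - r) ^ (α + p)) :
    IntervalIntegrable (fun x => K' x r * ψ x) volume a b ∧
    |∫ x in a..b, K' x r * ψ x| ≤ C * D * ((b - r) ^ p - (a - r) ^ p) / p := by
  have hc : IntervalIntegrable (fun x => C * D * (x - r) ^ (p - 1)) volume a b :=
    (rpow_ii hp).const_mul _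
  have hbd : ∀ x ∈ Ioc a b, ‖K' x r * ψ x‖ ≤ C * D * (x - r) ^ (p - 1) := by
    intro x hx
    have hxr : 0 < x - r := by have := hx.1; linarith
    have h1 := (h.2 r x hr (lt_of_le_of_lt ha hx.1) (hx.2.trans hb)).2
    have h2 := hD x hx
    rw [norm_mul, Real.norm_eq_abs, Real.norm_eq_abs]
    calc |K' x r| * |ψ x| ≤ (C * (x - r) ^ (-(α + 1))) * (D * (x - r) ^ (α + p)) := by
          gcongr
      _ = C * D * ((x - r) ^ (-(α + 1)) * (x - r) ^ (α + p)) := by ring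
      _ = _ := by rw [← Real.rpow_add hxr]; congr 2; ring
  constructor
  · refine hc.mono_fun' ?_ ?_
    · rw [uIoc_of_le hab]
      refine (K'_aesm h hr ha hb).mul ?_
      refine ContinuousOn.aestronglyMeasurable (hψ.mono ?_) measurableSet_Ioc
      intro x hx
      exact ⟨by linarith [hx.1], hx.2.trans hb⟩
    · rw [uIoc_of_le hab]
      exact (ae_restrict_iff' measurableSet_Ioc).2 (Filter.Eventually.of_forall hbd)
  · have := intervalIntegral.norm_integral_le_of_norm_le (μ := volume) hab
      (Filter.Eventually.of_forall hbd) hc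
    rw [intervalIntegral.integral_const_mul, rpow_int hp, Real.norm_eq_abs] at this
    rw [mul_div_assoc]
    exact this

lemma K_far_bound {T α C : ℝ} {K K' : ℝ → ℝ → ℝ} (hC : 0 ≤ C) (hα : 0 < α) (h : CondA T α C K K')
    {r a : ℝ} (hr : 0 < r) (ha : r < a) (haT : a ≤ T) :
    |K a r| ≤ |K T r| + C / α * (a - r) ^ (-α) := by
  obtain ⟨hi, he⟩ := K'_ftc h hr ha haT le_rfl
  have hc : IntervalIntegrable (fun x => C * (x - r) ^ (-(α + 1))) volume a T := by
    apply ContinuousOn.intervalIntegrable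
    rw [uIcc_of_le haT]
    refine continuousOn_const.mul (ContinuousOn.rpow_const (by fun_prop) ?_)
    intro x hx
    left
    have := hx.1
    linarith
  have hb := intervalIntegral.norm_integral_le_of_norm_le (μ := volume) (f := fun x => K' x r) haT
    (Filter.Eventually.of_forall fun x hx => (h.2 r x hr (ha.trans hx.1) hx.2).2) hc
  rw [he, intervalIntegral.integral_const_mul,
    intervalIntegral.integral_comp_sub_right (fun x => x ^ (-(α + 1))) r,
    integral_rpow (Or.inr ⟨by linarith, by
      rw [uIcc_of_le (by linarith)]; intro h0; linarith [h0.1]⟩), Real.norm_eq_abs] at hb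
  have e : (-(α + 1) + 1) = -α := by ring
  rw [e] at hb
  have hpos : 0 ≤ (T - r) ^ (-α) := Real.rpow_nonneg (by linarith) _
  have h3 : C * (((T - r) ^ (-α) - (a - r) ^ (-α)) / -α) ≤ C / α * (a - r) ^ (-α) := by
    have : C * (((T - r) ^ (-α) - (a - r) ^ (-α)) / -α) =
      C / α * (a - r) ^ (-α) - C / α * (T - r) ^ (-α) := by field_simp; ring
    rw [this]
    have : 0 ≤ C / α * (T - r) ^ (-α) := by positivity
    linarith
  have h4 : |K a r| ≤ |K T r| + |K T r - K a r| := by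
    have := abs_sub_abs_le_abs_sub (K a r) (K T r)
    rw [abs_sub_comm] at this; linarith
  linarith

lemma Partition.mono {T : ℝ} (P : Partition T) : ∀ {i j : ℕ}, i ≤ j → j ≤ P.n →
    P.pts i ≤ P.pts j := by
  intro i j hij
  induction j, hij using Nat.le_induction with
  | base => intro _; exact le_rfl
  | succ j _ ih => intro hj; exact (ih (by omega)).trans (P.lt j (by omega)).le

lemma Partition.mem {T : ℝ} (P : Partition T) {i : ℕ} (hi : i ≤ P.n) : P.pts i ∈ Icc 0 T := by
  refine ⟨?_, ?_⟩
  · rw [← P.first]; exact P.mono (Nat.zero_le _) hi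
  · have := P.mono hi le_rfl
    rwa [P.last] at this

lemma Partition.le_mesh {T : ℝ} (P : Partition T) {i : ℕ} (hi : i < P.n) :
    P.pts (i + 1) - P.pts i ≤ P.mesh :=
  Finset.le_sup' (fun i => P.pts (i + 1) - P.pts i) (Finset.mem_range.2 hi)

/-- the inner sum -/
def SP {T : ℝ} (P : Partition T) (K : ℝ → ℝ → ℝ) (φ : ℝ → ℝ) (m : ℕ) (r : ℝ) : ℝ :=
  ∑ i ∈ Finset.range m, φ (P.pts i) * (K (P.pts (i + 1)) r - K (P.pts i) r)

lemma SP_bound {T α C lam H δ : ℝ} {K K' : ℝ → ℝ → ℝ} (hV : IsVolterraKernel K)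
    (hC : 0 ≤ C) (hH : 0 ≤ H) (h : CondA T α C K K') (hα : 0 < α) (hαlam : α < lam) {φ : ℝ → ℝ}
    (hφ : IsHolderWith T lam H φ) (P : Partition T) (hδ : P.mesh ≤ δ) {k : ℕ} (hk : k < P.n)
    {r : ℝ} (hr : r ∈ Ioo (P.pts k) (P.pts (k + 1))) :
    ∀ m, k + 1 ≤ m → m ≤ P.n →
    |SP P K φ m r - (K (P.pts m) r * φ r + ∫ x in r..P.pts m, K' x r * (φ x - φ r))
      - (φ (P.pts k) - φ r) * K (P.pts (k + 1)) r| ≤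
      C * (H * δ ^ ((lam - α) / 2)) * (P.pts m - r) ^ ((lam - α) / 2) / ((lam - α) / 2) := by
  set q := (lam - α) / 2 with hq
  have hq0 : 0 < q := by linarith
  have hr0 : 0 < r := lt_of_le_of_lt (P.mem hk.le).1 hr.1
  have hφc := holder_cont (hα.trans hαlam) hφ
  have hrT : r ≤ T := hr.2.le.trans (P.mem hk).2
  -- power trick
  have trick : ∀ y z : ℝ, 0 ≤ y → y ≤ δ → y ≤ z → y ^ lam ≤ δ ^ q * z ^ (α + q) := by
    intro y z hy hyδ hyz
    have : y ^ lam = y ^ q * y ^ (α + q) := by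
      rw [← Real.rpow_add_of_nonneg hy hq0.le (by linarith)]; congr 1; rw [hq]; ring
    rw [this]
    have hδ0 : 0 ≤ δ := hy.trans hyδ
    have hδq : 0 ≤ δ ^ q := Real.rpow_nonneg hδ0 _
    gcongr
  intro m hm
  induction m, hm using Nat.le_induction with
  | base =>
    intro hkn
    have hz : ∀ i ≤ k, K (P.pts i) r = 0 := fun i hi =>
      hV.2 _ _ ((P.mono hi hk.le).trans hr.1.le)
    have hs : SP P K φ (k + 1) r = φ (P.pts k) * K (P.pts (k + 1)) r := by
      rw [SP, Finset.sum_range_succ, hz k le_rfl, Finset.sum_eq_zero]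
      · ring
      · intro i hi
        have := Finset.mem_range.1 hi
        rw [hz i (by omega), hz (i + 1) (by omega)]; ring
    have hb := (K'_mul_bound hC h (p := q) (D := H * δ ^ q) hr0 le_rfl hr.2.le (P.mem hk).2 hq0
      (ψ := fun x => φ x - φ r) (hφc.sub continuousOn_const) (by
        intro x hx
        refine (hφ x ⟨by linarith [hx.1], hx.2.trans (P.mem hk).2⟩ r ⟨hr0.le, hrT⟩).trans ?_
        have hxr : 0 < x - r := by linarith [hx.1]
        rw [abs_of_pos hxr, mul_assoc]
        have := trick (x - r) (x - r) hxr.le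
          (by linarith [hx.2, P.le_mesh hk, hr.1]) le_rfl
        gcongr)).2
    rw [sub_self, Real.zero_rpow hq0.ne', sub_zero] at hb
    rw [hs]
    refine le_trans (le_of_eq ?_) hb
    rw [← abs_neg]
    congr 1
    ring
  | succ m hm ih =>
    intro hmn
    have ih := ih (by omega)
    have hum : P.pts (k + 1) ≤ P.pts m := P.mono hm (by omega)
    have hrm : r < P.pts m := hr.2.trans_le hum
    have hlt := P.lt m (by omega)
    have hmT := (P.mem hmn).2
    obtain ⟨hi, he⟩ := K'_ftc h hr0 hrm hlt.le hmT
    have hi1 := (K'_mul_bound hC h (p := 2 * q) (D := H) hr0 le_rfl hrm.le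
      (hlt.le.trans hmT) (by linarith) (ψ := fun x => φ x - φ r) (hφc.sub continuousOn_const) (by
        intro x hx
        refine (hφ x ⟨by linarith [hx.1], hx.2.trans (hlt.le.trans hmT)⟩ r ⟨hr0.le, hrT⟩).trans ?_
        have hxr : 0 < x - r := by linarith [hx.1]
        rw [abs_of_pos hxr]
        have : α + 2 * q = lam := by rw [hq]; ring
        rw [this])).1
    have hi2 := (K'_mul_bound hC h (p := q) (D := H * δ ^ q) hr0 hrm.le hlt.le
      hmT hq0 (ψ := fun x => φ (P.pts m) - φ x) (continuousOn_const.sub hφc) (by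
        intro x hx
        refine (hφ (P.pts m) (P.mem (by omega)) x ⟨by linarith [hx.1], hx.2.trans hmT⟩).trans ?_
        have hxr : 0 < x - P.pts m := by linarith [hx.1]
        rw [abs_sub_comm, abs_of_pos hxr, mul_assoc]
        have := trick (x - P.pts m) (x - r) hxr.le
          (by linarith [hx.2, P.le_mesh (i := m) (by omega)]) (by linarith)
        gcongr))
    have hi3 : IntervalIntegrable (fun x => K' x r * (φ x - φ r)) volume (P.pts m)
        (P.pts (m + 1)) := by
      have := (hi.mul_const (φ (P.pts m) - φ r)).sub hi2.1
      refine this.congr ?_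
      intro x _
      simp only
      ring
    have e1 : ∫ x in r..P.pts (m + 1), K' x r * (φ x - φ r) =
        (∫ x in r..P.pts m, K' x r * (φ x - φ r)) +
        ∫ x in P.pts m..P.pts (m + 1), K' x r * (φ x - φ r) :=
      (intervalIntegral.integral_add_adjacent_intervals hi1 hi3).symm
    have e2 : ∫ x in P.pts m..P.pts (m + 1), K' x r * (φ x - φ r) =
        (K (P.pts (m + 1)) r - K (P.pts m) r) * (φ (P.pts m) - φ r) -
        ∫ x in P.pts m..P.pts (m + 1), K' x r * (φ (P.pts m) - φ x) := by
      rw [← he, ← intervalIntegral.integral_mul_const,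
        ← intervalIntegral.integral_sub (hi.mul_const _) hi2.1]
      congr 1
      funext x
      ring
    rw [e1, e2, SP, Finset.sum_range_succ]
    rw [SP] at ih
    have h2 := hi2.2
    have tri := (abs_add_le _ _).trans (add_le_add ih h2)
    refine le_trans (le_of_eq ?_) (tri.trans (le_of_eq ?_))
    · congr 1; ring
    · ring

lemma memK {T α C : ℝ} {K K' : ℝ → ℝ → ℝ} (hV : IsVolterraKernel K)
    (h : CondA T α C K K') (hα : 0 < α) (hα' : α < 1 / 4) {t : ℝ}
    (ht : t ∈ Icc 0 T) : MemLp (fun r => K t r) 2 (volume.restrict (Ioc 0 T)) := by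
  have hm : Measurable (fun r => K t r) := hV.1.comp (measurable_const.prodMk measurable_id)
  rw [memLp_two_iff_integrable_sq hm.aestronglyMeasurable]
  have i1 : IntervalIntegrable (fun x : ℝ => x ^ (-(4 * α))) volume 0 t :=
    intervalIntegral.intervalIntegrable_rpow' (by linarith)
  have i2 : IntervalIntegrable (fun x : ℝ => (t - x) ^ (-(4 * α))) volume 0 t := by
    simpa using (i1.comp_sub_left t).symm
  have i3 := ((i1.add i2).const_mul (C ^ 2)).1
  have i4 : IntegrableOn (fun x => K t x ^ 2) (Ioc 0 t) := by
    refine i3.mono' (hm.pow_const 2).aestronglyMeasurable ?_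
    refine (ae_restrict_iff' measurableSet_Ioc).2 (Filter.Eventually.of_forall fun x hx => ?_)
    have hx0 := hx.1
    rcases hx.2.lt_or_eq with hxt | hxt
    · have hb := h.1 x t hx0 hxt ht.2
      have htx : 0 < t - x := by linarith
      have e1 : x ^ (-(4 * α)) = (x ^ (-α)) ^ 4 := by
        rw [← Real.rpow_mul_natCast hx0.le]; congr 1; push_cast; ring
      have e2 : (t - x) ^ (-(4 * α)) = ((t - x) ^ (-α)) ^ 4 := by
        rw [← Real.rpow_mul_natCast htx.le]; congr 1; push_cast; ring
      have hsq : K t x ^ 2 ≤ (C * x ^ (-α) * (t - x) ^ (-α)) ^ 2 := by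
        rw [← sq_abs]; gcongr
      simp only [Real.norm_eq_abs]
      rw [abs_of_nonneg (sq_nonneg _), e1, e2]
      refine hsq.trans ?_
      have : (C * x ^ (-α) * (t - x) ^ (-α)) ^ 2 =
        C ^ 2 * ((x ^ (-α)) ^ 2 * ((t - x) ^ (-α)) ^ 2) := by ring
      rw [this]
      refine mul_le_mul_of_nonneg_left ?_ (sq_nonneg _)
      nlinarith [sq_nonneg ((x ^ (-α)) ^ 2 - ((t - x) ^ (-α)) ^ 2), sq_nonneg ((x ^ (-α)) ^ 2),
        sq_nonneg (((t - x) ^ (-α)) ^ 2)]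
    · rw [hV.2 t x hxt.ge]
      have := Real.rpow_nonneg hx0.le (-(4 * α))
      have := Real.rpow_nonneg (show 0 ≤ t - x by linarith) (-(4 * α))
      rw [zero_pow two_ne_zero, norm_zero]
      positivity
  have : IntegrableOn (fun x => K t x ^ 2) (Ioc 0 t ∪ Ioc t T) := by
    refine i4.union ?_
    refine (integrableOn_zero (s := Ioc t T)).congr_fun ?_ measurableSet_Ioc
    intro x hx
    simp [hV.2 t x hx.1.le]
  rwa [Ioc_union_Ioc_eq_Ioc ht.1 ht.2] at this

lemma memKstar {T α C lam H : ℝ} {K K' : ℝ → ℝ → ℝ} (hT : 0 < T) (hV : IsVolterraKernel K)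
    (hC : 0 ≤ C) (hH : 0 ≤ H) (h : CondA T α C K K') (hα : 0 < α) (hα' : α < 1 / 4)
    (hαlam : α < lam) {φ : ℝ → ℝ} (hφ : IsHolderWith T lam H φ) :
    MemLp (Kstar T K K' φ) 2 (volume.restrict (Ioc 0 T)) := by
  have hlam : 0 < lam := hα.trans hαlam
  have hφc := holder_cont hlam hφ
  have hφm : AEStronglyMeasurable φ (volume.restrict (Ioc 0 T)) :=
    (hφc.mono Ioc_subset_Icc_self).aestronglyMeasurable measurableSet_Ioc
  have h1 : MemLp (fun s => K T s * φ s) 2 (volume.restrict (Ioc 0 T)) := by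
    obtain ⟨B, hB⟩ := isCompact_Icc.exists_bound_of_continuousOn hφc
    refine MemLp.of_le_mul (c := B) (memK hV h hα hα' (t := T) ⟨hT.le, le_rfl⟩)
      ((memK hV h hα hα' (t := T) ⟨hT.le, le_rfl⟩).1.mul hφm) ?_
    refine (ae_restrict_iff' measurableSet_Ioc).2 (Filter.Eventually.of_forall fun x hx => ?_)
    rw [norm_mul, mul_comm]
    exact mul_le_mul_of_nonneg_right (hB x (Ioc_subset_Icc_self hx)) (norm_nonneg _)
  have h2 : MemLp (fun s => ∫ r in s..T, K' r s * (φ r - φ s)) 2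
      (volume.restrict (Ioc 0 T)) := by
    refine MemLp.of_bound ?_ (C * H * T ^ (lam - α) / (lam - α)) ?_
    · -- measurability
      let φ' : ℝ → ℝ := IccExtend hT.le ((Icc 0 T).domRestrict φ)
      have hφ'c : Continuous φ' := (continuousOn_iff_continuous_domRestrict.1 hφc).Icc_extend'
      have hφ' : ∀ x ∈ Icc 0 T, φ' x = φ x := fun x hx => by
        simp only [φ']; rw [IccExtend_of_mem _ _ hx]; rfl
      let M : Set (ℝ × ℝ) := {p | 0 < p.1 ∧ p.1 < p.2 ∧ p.2 ≤ T}
      have hM : MeasurableSet M := by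
        refine (measurableSet_lt measurable_const measurable_fst).inter
          ((measurableSet_lt measurable_fst measurable_snd).inter
            (measurableSet_le measurable_snd measurable_const))
      let G : ℝ × ℝ → ℝ := M.indicator (fun p => K' p.2 p.1 * (φ' p.2 - φ' p.1))
      let g : ℕ → ℝ × ℝ → ℝ := fun n => M.indicator
        (fun p => (((n : ℝ) + 1) * (K (p.2 + 1 / ((n : ℝ) + 1)) p.1 - K p.2 p.1))
          * (φ' p.2 - φ' p.1))
      have hKm := hV.1
      have hφ'm := hφ'c.measurable
      have hg : ∀ n, Measurable (g n) := by
        intro n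
        refine Measurable.indicator ?_ hM
        refine Measurable.mul (measurable_const.mul (Measurable.sub ?_ ?_)) (by fun_prop)
        · exact hKm.comp (f := fun p : ℝ × ℝ => (p.2 + 1 / ((n : ℝ) + 1), p.1)) (by fun_prop)
        · exact hKm.comp (f := fun p : ℝ × ℝ => (p.2, p.1)) (by fun_prop)
      have hG : Measurable G := by
        refine measurable_of_tendsto_metrizable hg ?_
        rw [tendsto_pi_nhds]
        intro p
        by_cases hp : p ∈ M
        · simp only [g, G, indicator_of_mem hp]
          refine Filter.Tendsto.mul_const _ ?_
          have hd := (h.2 p.1 p.2 hp.1 hp.2.1 hp.2.2).1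
          have := (hd.tendsto_slope_zero_right).comp (tendsto_nhdsWithin_iff.2
            ⟨tendsto_one_div_add_atTop_nhds_zero_nat (𝕜 := ℝ), Filter.Eventually.of_forall
              fun n => by simp only [mem_Ioi]; positivity⟩)
          refine this.congr ?_
          intro n
          simp
        · simp only [g, G, indicator_of_notMem hp]
          exact tendsto_const_nhds
      have hsm : StronglyMeasurable (fun s => ∫ r, G (s, r)) :=
        StronglyMeasurable.integral_prod_right (f := fun s r => G (s, r)) hG.stronglyMeasurable
      refine hsm.aestronglyMeasurable.congr ?_
      refine (ae_restrict_iff' measurableSet_Ioc).2 (Filter.Eventually.of_forall fun s hs => ?_)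
      simp only
      rw [intervalIntegral.integral_of_le hs.2, ← integral_indicator measurableSet_Ioc]
      congr 1
      funext r
      by_cases hr : r ∈ Ioc s T
      · have : (s, r) ∈ M := ⟨hs.1, hr.1, hr.2⟩
        simp only [G]
        rw [indicator_of_mem this, indicator_of_mem hr, hφ' s (Ioc_subset_Icc_self hs),
          hφ' r ⟨hs.1.le.trans hr.1.le, hr.2⟩]
      · have : (s, r) ∉ M := fun hh => hr ⟨hh.2.1, hh.2.2⟩
        simp only [G]
        rw [indicator_of_notMem this, indicator_of_notMem hr]
    · refine (ae_restrict_iff' measurableSet_Ioc).2 (Filter.Eventually.of_forall fun s hs => ?_)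
      have hp : 0 < lam - α := by linarith
      have := (K'_mul_bound hC h (p := lam - α) (D := H) hs.1 le_rfl hs.2 le_rfl hp
        (ψ := fun x => φ x - φ s) (hφc.sub continuousOn_const) (by
          intro x hx
          refine (hφ x ⟨by linarith [hx.1, hs.1], hx.2⟩ s (Ioc_subset_Icc_self hs)).trans ?_
          have hxr : 0 < x - s := by linarith [hx.1]
          rw [abs_of_pos hxr]
          have : α + (lam - α) = lam := by ring
          rw [this])).2
      rw [sub_self, Real.zero_rpow hp.ne', sub_zero] at this
      rw [Real.norm_eq_abs]
      refine this.trans ?_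
      have h0 : 0 ≤ T - s := by linarith [hs.2]
      have : (T - s) ^ (lam - α) ≤ T ^ (lam - α) := by
        apply Real.rpow_le_rpow h0 (by linarith [hs.1]) hp.le
      gcongr
  have := h1.add h2
  refine this.congr_norm ?_ ?_
  · exact this.1
  · exact Filter.Eventually.of_forall fun s => by simp [Kstar]

lemma memSP {T α C : ℝ} {K K' : ℝ → ℝ → ℝ} (hV : IsVolterraKernel K)
    (h : CondA T α C K K') (hα : 0 < α) (hα' : α < 1 / 4) (φ : ℝ → ℝ) (P : Partition T) :
    MemLp (SP P K φ P.n) 2 (volume.restrict (Ioc 0 T)) := by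
  have : MemLp (fun r => ∑ i ∈ Finset.range P.n,
      φ (P.pts i) * (K (P.pts (i + 1)) r - K (P.pts i) r)) 2 (volume.restrict (Ioc 0 T)) := by
    refine memLp_finsetSum _ fun i hi => ?_
    have hi := Finset.mem_range.1 hi
    exact ((memK hV h hα hα' (P.mem (i := i + 1) hi)).sub
      (memK hV h hα hα' (P.mem (i := i) hi.le))).const_mul _
  exact this

lemma covR_eq {T : ℝ} {K : ℝ → ℝ → ℝ} (hV : IsVolterraKernel K) {s t : ℝ}
    (hs : s ∈ Icc 0 T) (ht : t ∈ Icc 0 T) :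
    covR K s t = ∫ r in Ioc 0 T, K s r * K t r := by
  rw [covR, intervalIntegral.integral_of_le (le_min hs.1 ht.1)]
  rw [setIntegral_eq_of_subset_of_forall_sdiff_eq_zero (s := Ioc 0 (min s t)) (t := Ioc 0 T)
    (f := fun r => K s r * K t r) measurableSet_Ioc]
  · congr 1; funext r; ring
  · exact Ioc_subset_Ioc_right (min_le_of_left_le hs.2)
  · intro x hx
    have : min s t < x := by
      by_contra hh
      exact hx.2 ⟨hx.1.1, not_lt.1 hh⟩
    rcases min_lt_iff.1 this with h1 | h1
    · rw [hV.2 s x h1.le, zero_mul]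
    · rw [hV.2 t x h1.le, mul_zero]

lemma integral_four {μ : Measure ℝ} {f₁ f₂ f₃ f₄ : ℝ → ℝ} (h₁ : Integrable f₁ μ)
    (h₂ : Integrable f₂ μ) (h₃ : Integrable f₃ μ) (h₄ : Integrable f₄ μ) :
    ∫ x, (f₁ x + f₂ x - f₃ x - f₄ x) ∂μ =
      (∫ x, f₁ x ∂μ) + (∫ x, f₂ x ∂μ) - (∫ x, f₃ x ∂μ) - ∫ x, f₄ x ∂μ := by
  have e := integral_sub ((h₁.add h₂).sub h₃) h₄
  have e2 := integral_sub (h₁.add h₂) h₃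
  have e3 := integral_add h₁ h₂
  simp only [Pi.add_apply, Pi.sub_apply] at e e2 e3
  rw [e, e2, e3]

lemma RSsum_eq {T α C : ℝ} {K K' : ℝ → ℝ → ℝ} (hV : IsVolterraKernel K)
    (h : CondA T α C K K') (hα : 0 < α) (hα' : α < 1 / 4) (φ₁ φ₂ : ℝ → ℝ) (P Q : Partition T) :
    RSsum P Q (fun s t => φ₁ s * φ₂ t) (covR K) =
      ∫ r in Ioc 0 T, SP P K φ₁ P.n r * SP Q K φ₂ Q.n r := by
  have hi : ∀ s ∈ Icc 0 T, ∀ t ∈ Icc 0 T,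
      Integrable (fun r => K s r * K t r) (volume.restrict (Ioc 0 T)) := fun s hs t ht =>
    (memK hV h hα hα' hs).integrable_mul (memK hV h hα hα' ht)
  have hi2 : ∀ i ∈ Finset.range P.n, ∀ j ∈ Finset.range Q.n, Integrable (fun r =>
      φ₁ (P.pts i) * (K (P.pts (i + 1)) r - K (P.pts i) r) *
      (φ₂ (Q.pts j) * (K (Q.pts (j + 1)) r - K (Q.pts j) r))) (volume.restrict (Ioc 0 T)) := by
    intro i hi j hj
    have hi := Finset.mem_range.1 hi
    have hj := Finset.mem_range.1 hj
    exact (((memK hV h hα hα' (P.mem (i := i + 1) hi)).sub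
      (memK hV h hα hα' (P.mem (i := i) hi.le))).const_mul _).integrable_mul
      (((memK hV h hα hα' (Q.mem (i := j + 1) hj)).sub
      (memK hV h hα hα' (Q.mem (i := j) hj.le))).const_mul _)
  simp only [SP, Finset.sum_mul_sum]
  rw [integral_finsetSum _ fun i hi => integrable_finsetSum _ fun j hj => hi2 i hi j hj, RSsum]
  refine Finset.sum_congr rfl fun i hi' => ?_
  rw [integral_finsetSum _ fun j hj => hi2 i hi' j hj]
  refine Finset.sum_congr rfl fun j hj' => ?_
  have hin := Finset.mem_range.1 hi'
  have hjn := Finset.mem_range.1 hj'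
  have p0 := P.mem hin.le
  have p1 := P.mem (i := i + 1) hin
  have q0 := Q.mem hjn.le
  have q1 := Q.mem (i := j + 1) hjn
  rw [rectInc, covR_eq hV p0 q0, covR_eq hV p1 q1, covR_eq hV p0 q1, covR_eq hV p1 q0]
  rw [← integral_four (hi _ p0 _ q0) (hi _ p1 _ q1) (hi _ p0 _ q1) (hi _ p1 _ q0),
    ← integral_const_mul]
  congr 1
  funext r
  ring

lemma L2_bound {T α C lam H δ : ℝ} {K K' : ℝ → ℝ → ℝ} (hT : 0 < T) (hV : IsVolterraKernel K)
    (hC : 0 ≤ C) (hH : 0 ≤ H) (h : CondA T α C K K') (hα : 0 < α) (hα' : α < 1 / 4)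
    (hαlam : α < lam) {φ : ℝ → ℝ} (hφ : IsHolderWith T lam H φ) (P : Partition T)
    (hδ : P.mesh ≤ δ) :
    ∫ r in Ioc 0 T, (SP P K φ P.n r - Kstar T K K' φ r) ^ 2 ≤
      3 * (H * δ ^ lam) ^ 2 * (∫ r in Ioc 0 T, K T r ^ 2) +
      (3 * (C * (H * δ ^ ((lam - α) / 2)) * T ^ ((lam - α) / 2) / ((lam - α) / 2)) ^ 2 +
      3 * (H * (C / α)) ^ 2 * δ ^ (2 * lam - 2 * α) / (1 - 2 * α)) * T := by
  set B := C * (H * δ ^ ((lam - α) / 2)) * T ^ ((lam - α) / 2) / ((lam - α) / 2) with hB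
  set c := H * (C / α) with hc
  have hlam : 0 < lam := hα.trans hαlam
  have hcc : 0 ≤ c := by positivity
  have hd1 : ∀ k < P.n, P.pts (k + 1) - P.pts k ≤ δ := fun k hk => (P.le_mesh hk).trans hδ
  have hd0 : ∀ k < P.n, 0 < P.pts (k + 1) - P.pts k := fun k hk => sub_pos.2 (P.lt k hk)
  have hδ0 : 0 < δ := (hd0 0 P.n_pos).trans_le (hd1 0 P.n_pos)
  have hB0 : 0 ≤ B := by
    have : 0 < (lam - α) / 2 := by linarith
    positivity
  have hE2 : IntegrableOn (fun r => (SP P K φ P.n r - Kstar T K K' φ r) ^ 2) (Ioc 0 T) :=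
    ((memSP hV h hα hα' φ P).sub (memKstar hT hV hC hH h hα hα' hαlam hφ)).integrable_sq
  have hK2 : IntegrableOn (fun r => K T r ^ 2) (Ioc 0 T) :=
    (memK hV h hα hα' (t := T) ⟨hT.le, le_rfl⟩).integrable_sq
  have sub : ∀ k < P.n, ∀ f : ℝ → ℝ, IntegrableOn f (Ioc 0 T) →
      IntervalIntegrable f volume (P.pts k) (P.pts (k + 1)) := by
    intro k hk f hf
    rw [intervalIntegrable_iff_integrableOn_Ioc_of_le (P.lt k hk).le]
    exact hf.mono_set (Ioc_subset_Ioc (P.mem hk.le).1 (P.mem hk).2)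
  have split : ∀ f : ℝ → ℝ, IntegrableOn f (Ioc 0 T) → ∫ r in Ioc 0 T, f r =
      ∑ k ∈ Finset.range P.n, ∫ r in P.pts k..P.pts (k + 1), f r := by
    intro f hf
    rw [intervalIntegral.sum_integral_adjacent_intervals (fun k hk => sub k hk f hf), P.first,
      P.last, intervalIntegral.integral_of_le hT.le]
  rw [split _ hE2, split _ hK2]
  have hTs : T = ∑ k ∈ Finset.range P.n, (P.pts (k + 1) - P.pts k) := by
    rw [Finset.sum_range_sub, P.first, P.last, sub_zero]
  have hTs2 : ∀ x : ℝ, x * T = ∑ k ∈ Finset.range P.n, x * (P.pts (k + 1) - P.pts k) := by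
    intro x
    rw [← Finset.mul_sum, ← hTs]
  rw [hTs2, Finset.mul_sum, ← Finset.sum_add_distrib]
  refine Finset.sum_le_sum fun k hk => ?_
  have hk := Finset.mem_range.1 hk
  set u := P.pts k with hu
  set v := P.pts (k + 1) with hv
  have huv : u < v := P.lt k hk
  have hΔ := hd0 k hk
  have hΔδ := hd1 k hk
  have hp : 0 < 1 - 2 * α := by linarith
  have i0 : IntervalIntegrable (fun x : ℝ => x ^ (-(2 * α))) volume 0 (v - u) :=
    intervalIntegral.intervalIntegrable_rpow' (by linarith)
  have i1 : IntervalIntegrable (fun r => (v - r) ^ (-(2 * α))) volume u v := by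
    simpa using (i0.comp_sub_left v).symm
  have e1 : ∫ r in u..v, (v - r) ^ (-(2 * α)) = (v - u) ^ (1 - 2 * α) / (1 - 2 * α) := by
    rw [intervalIntegral.integral_comp_sub_left (fun x => x ^ (-(2 * α))) v,
      integral_rpow (Or.inl (by linarith))]
    have : -(2 * α) + 1 = 1 - 2 * α := by ring
    rw [this, sub_self, Real.zero_rpow hp.ne', sub_zero]
  have iK := sub k hk _ hK2
  have j1 := iK.const_mul (3 * (H * δ ^ lam) ^ 2)
  have j2 : IntervalIntegrable (fun _ : ℝ => 3 * B ^ 2) volume u v := intervalIntegrable_const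
  have j3 := i1.const_mul (3 * c ^ 2 * ((v - u) ^ lam) ^ 2)
  have mono := intervalIntegral.integral_mono_on_of_le_Ioo huv.le (sub k hk _ hE2)
    ((j1.add j2).add j3) (by
    intro r hr
    have hr0 : 0 < r := lt_of_le_of_lt (P.mem hk.le).1 hr.1
    have hrT : r ≤ T := hr.2.le.trans (P.mem hk).2
    have b := SP_bound hV hC hH h hα hαlam hφ P hδ hk hr P.n hk le_rfl
    rw [P.last] at b
    have hks : Kstar T K K' φ r = K T r * φ r + ∫ x in r..T, K' x r * (φ x - φ r) := by
      simp [Kstar]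
    rw [← hks] at b
    have bB : C * (H * δ ^ ((lam - α) / 2)) * (T - r) ^ ((lam - α) / 2) / ((lam - α) / 2) ≤ B := by
      have hq : 0 < (lam - α) / 2 := by linarith
      have : (T - r) ^ ((lam - α) / 2) ≤ T ^ ((lam - α) / 2) :=
        Real.rpow_le_rpow (by linarith) (by linarith) hq.le
      rw [hB]
      gcongr
    have f1 := K_far_bound hC hα h hr0 hr.2 (P.mem hk).2
    have f2 := hφ (P.pts k) (P.mem hk.le) r ⟨hr0.le, hrT⟩
    rw [Real.norm_eq_abs, ← hu, abs_sub_comm u r, abs_of_pos (sub_pos.2 hr.1)] at f2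
    have hur : 0 < r - u := sub_pos.2 hr.1
    have hvr : 0 < v - r := sub_pos.2 hr.2
    have f3 : (r - u) ^ lam ≤ (v - u) ^ lam :=
      Real.rpow_le_rpow hur.le (by linarith) hlam.le
    have f4 : (v - u) ^ lam ≤ δ ^ lam := Real.rpow_le_rpow hΔ.le hΔδ hlam.le
    have e3 : (v - r) ^ (-(2 * α)) = ((v - r) ^ (-α)) ^ 2 := by
      rw [← Real.rpow_mul_natCast hvr.le]; congr 1; push_cast; ring
    have f5 : |(φ u - φ r) * K v r| ≤
        H * δ ^ lam * |K T r| + c * (v - u) ^ lam * (v - r) ^ (-α) := by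
      rw [abs_mul]
      calc |φ u - φ r| * |K v r| ≤
            (H * (v - u) ^ lam) * (|K T r| + C / α * (v - r) ^ (-α)) := by
            refine mul_le_mul (f2.trans ?_) f1 (abs_nonneg _) (by positivity)
            gcongr
        _ = H * (v - u) ^ lam * |K T r| + c * (v - u) ^ lam * (v - r) ^ (-α) := by rw [hc]; ring
        _ ≤ _ := by gcongr
    set E := SP P K φ P.n r - Kstar T K K' φ r with hE
    have f6 : |E| ≤ H * δ ^ lam * |K T r| + B + c * (v - u) ^ lam * (v - r) ^ (-α) := by
      have := abs_sub_abs_le_abs_sub E ((φ u - φ r) * K v r)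
      linarith
    have f7 : E ^ 2 ≤ (H * δ ^ lam * |K T r| + B + c * (v - u) ^ lam * (v - r) ^ (-α)) ^ 2 := by
      rw [← sq_abs]; gcongr
    refine f7.trans ?_
    rw [e3, ← sq_abs (K T r)]
    generalize |K T r| = X
    generalize (v - r) ^ (-α) = Z
    generalize (v - u) ^ lam = Y
    generalize H * δ ^ lam = W
    nlinarith [sq_nonneg (W * X - B), sq_nonneg (W * X - c * Y * Z), sq_nonneg (B - c * Y * Z)])
  refine mono.trans ?_
  have ee : ∫ r in u..v, (3 * (H * δ ^ lam) ^ 2 * K T r ^ 2 + 3 * B ^ 2 +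
      3 * c ^ 2 * ((v - u) ^ lam) ^ 2 * (v - r) ^ (-(2 * α))) =
      3 * (H * δ ^ lam) ^ 2 * (∫ r in u..v, K T r ^ 2) + 3 * B ^ 2 * (v - u) +
      3 * c ^ 2 * ((v - u) ^ lam) ^ 2 * ((v - u) ^ (1 - 2 * α) / (1 - 2 * α)) := by
    have a1 := intervalIntegral.integral_add (j1.add j2) j3
    have a2 := intervalIntegral.integral_add j1 j2
    rw [← hu, ← hv] at a1 a2
    rw [a1, a2, intervalIntegral.integral_const_mul, intervalIntegral.integral_const,
      intervalIntegral.integral_const_mul, e1]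
    simp only [smul_eq_mul]
    ring
  rw [ee]
  have e4 : ((v - u) ^ lam) ^ 2 * (v - u) ^ (1 - 2 * α) =
      (v - u) ^ (2 * lam - 2 * α) * (v - u) := by
    rw [← Real.rpow_mul_natCast hΔ.le, ← Real.rpow_add hΔ]
    nth_rewrite 3 [← Real.rpow_one (v - u)]
    rw [← Real.rpow_add hΔ]
    congr 1; push_cast; ring
  have e5 : (v - u) ^ (2 * lam - 2 * α) ≤ δ ^ (2 * lam - 2 * α) :=
    Real.rpow_le_rpow hΔ.le hΔδ (by linarith)
  have e6 : 3 * c ^ 2 * ((v - u) ^ lam) ^ 2 * ((v - u) ^ (1 - 2 * α) / (1 - 2 * α)) ≤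
      3 * c ^ 2 * δ ^ (2 * lam - 2 * α) / (1 - 2 * α) * (v - u) := by
    calc _ = 3 * c ^ 2 * (((v - u) ^ lam) ^ 2 * (v - u) ^ (1 - 2 * α)) / (1 - 2 * α) := by ring
      _ = 3 * c ^ 2 * ((v - u) ^ (2 * lam - 2 * α) * (v - u)) / (1 - 2 * α) := by rw [e4]
      _ ≤ 3 * c ^ 2 * (δ ^ (2 * lam - 2 * α) * (v - u)) / (1 - 2 * α) := by gcongr
      _ = _ := by ring
  linarith

lemma L2_small {T α C lam : ℝ} {K K' : ℝ → ℝ → ℝ} (hT : 0 < T) (hV : IsVolterraKernel K)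
    (hC : 0 ≤ C) (h : CondA T α C K K') (hα : 0 < α) (hα' : α < 1 / 4)
    (hαlam : α < lam) {φ : ℝ → ℝ} (hφ : IsHolder T lam φ) :
    MemLp (Kstar T K K' φ) 2 (volume.restrict (Ioc 0 T)) ∧
    ∀ ε > 0, ∃ δ > 0, ∀ P : Partition T, P.mesh < δ →
      ∫ r in Ioc 0 T, (SP P K φ P.n r - Kstar T K K' φ r) ^ 2 < ε := by
  obtain ⟨H', hφ'⟩ := hφ
  obtain ⟨H, hH, hφ⟩ : ∃ H, 0 ≤ H ∧ IsHolderWith T lam H φ := by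
    refine ⟨|H'|, abs_nonneg _, fun s hs t ht => (hφ' s hs t ht).trans ?_⟩
    gcongr
    exact le_abs_self _
  refine ⟨memKstar hT hV hC hH h hα hα' hαlam hφ, fun ε hε => ?_⟩
  have hlam : 0 < lam := hα.trans hαlam
  have hp : ∀ p : ℝ, 0 < p → Filter.Tendsto (fun δ : ℝ => δ ^ p) (nhdsWithin 0 (Ioi 0)) (nhds 0) := by
    intro p hp
    have : Filter.Tendsto (fun δ : ℝ => δ ^ p) (nhds 0) (nhds (0 ^ p)) :=
      (Real.continuousAt_rpow_const 0 p (Or.inr hp.le)).tendsto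
    rw [Real.zero_rpow hp.ne'] at this
    exact this.mono_left nhdsWithin_le_nhds
  have t1 := hp lam hlam
  have t2 := hp ((lam - α) / 2) (by linarith)
  have t3 := hp (2 * lam - 2 * α) (by linarith)
  have t : Filter.Tendsto (fun δ : ℝ => 3 * (H * δ ^ lam) ^ 2 * (∫ r in Ioc 0 T, K T r ^ 2) +
      (3 * (C * (H * δ ^ ((lam - α) / 2)) * T ^ ((lam - α) / 2) / ((lam - α) / 2)) ^ 2 +
      3 * (H * (C / α)) ^ 2 * δ ^ (2 * lam - 2 * α) / (1 - 2 * α)) * T)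
      (nhdsWithin 0 (Ioi 0)) (nhds (3 * (H * 0) ^ 2 * (∫ r in Ioc 0 T, K T r ^ 2) +
      (3 * (C * (H * 0) * T ^ ((lam - α) / 2) / ((lam - α) / 2)) ^ 2 +
      3 * (H * (C / α)) ^ 2 * 0 / (1 - 2 * α)) * T)) := by
    refine (((((t1.const_mul H).pow 2).const_mul 3).mul_const _).add
      ((Filter.Tendsto.add ?_ ?_).mul_const _))
    · exact (((((t2.const_mul H).const_mul C).mul_const _).div_const _).pow 2).const_mul 3
    · exact (t3.const_mul _).div_const _
  simp only [mul_zero, zero_mul, zero_div, add_zero, zero_pow two_ne_zero] at t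
  have ev := (t.eventually_lt_const hε).and self_mem_nhdsWithin
  obtain ⟨δ, hδ1, hδ0⟩ := ev.exists
  refine ⟨δ, hδ0, fun P hP => ?_⟩
  exact (L2_bound hT hV hC hH h hα hα' hαlam hφ P hP.le).trans_lt hδ1

lemma L2_conv {μ : Measure ℝ} {A B : ℝ → ℝ} (hA : MemLp A 2 μ) (hB : MemLp B 2 μ) {ε : ℝ}
    (hε : 0 < ε) : ∃ η > 0, ∀ F G : ℝ → ℝ, MemLp F 2 μ → MemLp G 2 μ →
      ∫ r, (F r - A r) ^ 2 ∂μ < η → ∫ r, (G r - B r) ^ 2 ∂μ < η →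
      |(∫ r, F r * G r ∂μ) - ∫ r, A r * B r ∂μ| < ε := by
  set a := ∫ r, (A r) ^ 2 ∂μ with ha
  set b := ∫ r, (B r) ^ 2 ∂μ with hb
  have ha0 : 0 ≤ a := integral_nonneg fun r => sq_nonneg _
  have hb0 : 0 ≤ b := integral_nonneg fun r => sq_nonneg _
  set τ := ε / (a + b + 1) with hτ
  have hτ0 : 0 < τ := by positivity
  refine ⟨min (ε / 4) (ε * τ / 4), by positivity, fun F G hF hG h1 h2 => ?_⟩
  have iFA := (hF.sub hA).integrable_sq
  have iGB := (hG.sub hB).integrable_sq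
  have iA := hA.integrable_sq
  have iB := hB.integrable_sq
  have iFG : Integrable (fun r => F r * G r) μ := hF.integrable_mul hG
  have iAB : Integrable (fun r => A r * B r) μ := hA.integrable_mul hB
  rw [← integral_sub iFG iAB]
  have l1 : ∫ r, ((1 / 2 + 1 / (2 * τ)) * (F r - A r) ^ 2 + (1 / 2 + 1 / (2 * τ)) * (G r - B r) ^ 2
      + τ / 2 * A r ^ 2 + τ / 2 * B r ^ 2) ∂μ =
      (1 / 2 + 1 / (2 * τ)) * (∫ r, (F r - A r) ^ 2 ∂μ) +
      (1 / 2 + 1 / (2 * τ)) * (∫ r, (G r - B r) ^ 2 ∂μ) + τ / 2 * a + τ / 2 * b := by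
    have := integral_four (iFA.const_mul (1 / 2 + 1 / (2 * τ)))
      (iGB.const_mul (1 / 2 + 1 / (2 * τ))) (iA.const_mul (-(τ / 2))) (iB.const_mul (-(τ / 2)))
    simp only [Pi.sub_apply, integral_const_mul, neg_mul, integral_neg, sub_neg_eq_add] at this
    exact this
  have l2 : |∫ r, (F r * G r - A r * B r) ∂μ| ≤ ∫ r, ((1 / 2 + 1 / (2 * τ)) * (F r - A r) ^ 2
      + (1 / 2 + 1 / (2 * τ)) * (G r - B r) ^ 2 + τ / 2 * A r ^ 2 + τ / 2 * B r ^ 2) ∂μ := by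
    rw [← Real.norm_eq_abs]
    refine norm_integral_le_of_norm_le ((((iFA.const_mul (1 / 2 + 1 / (2 * τ))).add
      (iGB.const_mul (1 / 2 + 1 / (2 * τ)))).add (iA.const_mul (τ / 2))).add
      (iB.const_mul (τ / 2))) (Filter.Eventually.of_forall fun r => ?_)
    have key : ∀ x y : ℝ, |x * y| ≤ 1 / (2 * τ) * x ^ 2 + τ / 2 * y ^ 2 := by
      intro x y
      have : 1 / (2 * τ) * x ^ 2 + τ / 2 * y ^ 2 - |x * y| =
          1 / (2 * τ) * (|x| - τ * |y|) ^ 2 := by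
        rw [abs_mul, ← sq_abs x, ← sq_abs y]; field_simp; ring
      have : 0 ≤ 1 / (2 * τ) * (|x| - τ * |y|) ^ 2 := by positivity
      linarith
    have k1 := key (F r - A r) (B r)
    have k2 := key (G r - B r) (A r)
    have k3 : |(F r - A r) * (G r - B r)| ≤ 1 / 2 * (F r - A r) ^ 2 + 1 / 2 * (G r - B r) ^ 2 := by
      rw [abs_le]; constructor
      · nlinarith [sq_nonneg ((F r - A r) + (G r - B r))]
      · nlinarith [sq_nonneg ((F r - A r) - (G r - B r))]
    have e : F r * G r - A r * B r = (F r - A r) * (G r - B r) + (F r - A r) * B r +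
      (G r - B r) * A r := by ring
    rw [Real.norm_eq_abs, e]
    refine (abs_add_le _ _).trans ((add_le_add (abs_add_le _ _) le_rfl).trans ?_)
    linarith
  rw [l1] at l2
  refine l2.trans_lt ?_
  have m1 : ∀ x, x < min (ε / 4) (ε * τ / 4) → (1 / 2 + 1 / (2 * τ)) * x < ε / 4 := by
    intro x hx
    have x1 := lt_of_lt_of_le hx (min_le_left _ _)
    have x2 := lt_of_lt_of_le hx (min_le_right _ _)
    have : 1 / (2 * τ) * x < 1 / (2 * τ) * (ε * τ / 4) := by gcongr
    have e : 1 / (2 * τ) * (ε * τ / 4) = ε / 8 := by field_simp; norm_num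
    rw [add_mul]
    linarith
  have m2 : τ / 2 * a + τ / 2 * b ≤ ε / 2 := by
    have : τ * (a + b + 1) = ε := by rw [hτ]; field_simp
    nlinarith
  have := m1 _ h1
  have := m1 _ h2
  linarith

/-- for a product integrand `φ₁(s)φ₂(t)` of `λ`-Hölder functions with
`λ > α`, the 2D Young–Stieltjes integral against `R` exists and equals
`∫_0^T (𝒦*φ₁)(r)(𝒦*φ₂)(r) dr`. -/
theorem youngIntegral_covR_prod (T α lam : ℝ) (hT : 0 < T) (hα : 0 ≤ α) (hα' : α < 1 / 4)
    (K K' : ℝ → ℝ → ℝ) (hK : IsVolterraKernel K) (hA : ∃ C : ℝ, CondA T α C K K')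
    (φ₁ φ₂ : ℝ → ℝ) (hlam : 0 < lam) (hlam' : lam ≤ 1)
    (hφ₁ : IsHolder T lam φ₁) (hφ₂ : IsHolder T lam φ₂) (hαlam : α < lam) :
    ∀ ε > 0, ∃ δ > 0, ∀ P Q : Partition T, max P.mesh Q.mesh < δ →
      |RSsum P Q (fun s t => φ₁ s * φ₂ t) (covR K) -
        ∫ r in (0:ℝ)..T, Kstar T K K' φ₁ r * Kstar T K K' φ₂ r| < ε := by
  obtain ⟨C₀, hA₀⟩ := hA
  obtain ⟨α', h1, h2⟩ := exists_between (lt_min hα' hαlam)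
  have hα0 : 0 < α' := lt_of_le_of_lt hα h1
  obtain ⟨C, hC, h⟩ := condA_mono hT h1.le hA₀
  have h4 := h2.trans_le (min_le_left _ _)
  have hl := h2.trans_le (min_le_right _ _)
  obtain ⟨m₁, s₁⟩ := L2_small hT hK hC h hα0 h4 hl hφ₁
  obtain ⟨m₂, s₂⟩ := L2_small hT hK hC h hα0 h4 hl hφ₂
  intro ε hε
  obtain ⟨η, hη, H⟩ := L2_conv m₁ m₂ hε
  obtain ⟨δ₁, hδ₁, t₁⟩ := s₁ η hη
  obtain ⟨δ₂, hδ₂, t₂⟩ := s₂ η hη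
  refine ⟨min δ₁ δ₂, lt_min hδ₁ hδ₂, fun P Q hPQ => ?_⟩
  have hP := ((le_max_left _ _).trans_lt hPQ).trans_le (min_le_left _ _)
  have hQ := ((le_max_right _ _).trans_lt hPQ).trans_le (min_le_right _ _)
  rw [RSsum_eq hK h hα0 h4, intervalIntegral.integral_of_le hT.le]
  exact H _ _ (memSP hK h hα0 h4 φ₁ P) (memSP hK h hα0 h4 φ₂ Q) (t₁ P hP) (t₂ Q hQ)

end YS
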